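/- Explicit formula for the (p,q)-blossom: let n ≥ 1, let p, q be reals with 0 < q < p, and let S(t) = Σ_{k=0}^{n} a_k t^k be a real polynomial of degree at most n. Then the function s(u_1, …, u_n) = Σ_{k=0}^{n} a_k φ_{n,k}(u_1, …, u_n) / ((pq)^{k(k−1)/2} [n choose k]_{p,q}) is symmetric, multiaffine, and satisfies s(p^{n−1}t, p^{n−2}q t, …, q^{n−1}t) = S(t) for all real t; that is, s is the (p,q)-blossom of S. -/

import Mathlib

/-- The (p,q)-integer `[n]_{p,q} = Σ_{j=0}^{n-1} p^{n-1-j} q^j`. -/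
noncomputable def pqInt (p q : ℝ) (n : ℕ) : ℝ :=
  ∑ j ∈ Finset.range n, p ^ (n - 1 - j) * q ^ j

/-- The (p,q)-factorial `[n]_{p,q}! = ∏_{j=1}^{n} [j]_{p,q}`. -/
noncomputable def pqFact (p q : ℝ) : ℕ → ℝ
  | 0 => 1
  | n + 1 => pqFact p q n * pqInt p q (n + 1)

/-- The (p,q)-binomial coefficient `[n choose k]_{p,q}`. -/
noncomputable def pqBinom (p q : ℝ) (n k : ℕ) : ℝ :=
  pqFact p q n / (pqFact p q k * pqFact p q (n - k))

/-- The (p,q)-Bernstein basis function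
`B_k^n(t;p,q) = p^{k(k-1)/2 - n(n-1)/2} [n choose k]_{p,q} t^k ∏_{s=0}^{n-k-1} (p^s - q^s t)`. -/
noncomputable def pqBernstein (p q : ℝ) (n k : ℕ) (t : ℝ) : ℝ :=
  p ^ (k * (k - 1) / 2) / p ^ (n * (n - 1) / 2) * pqBinom p q n k * t ^ k *
    ∏ s ∈ Finset.range (n - k), (p ^ s - q ^ s * t)

/-- The `k`-th elementary symmetric polynomial in `n` variables:
`φ_{n,k}(u_1, …, u_n) = Σ_{1 ≤ i_1 < … < i_k ≤ n} u_{i_1} ⋯ u_{i_k}`. -/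
noncomputable def esymmEval (n k : ℕ) (u : Fin n → ℝ) : ℝ :=
  ∑ S ∈ Finset.powersetCard k (Finset.univ : Finset (Fin n)), ∏ i ∈ S, u i

/-- A function `f : ℝ^n → ℝ` is symmetric if it is invariant under all permutations
of its arguments. -/
def IsSymmetricFn (n : ℕ) (f : (Fin n → ℝ) → ℝ) : Prop :=
  ∀ (σ : Equiv.Perm (Fin n)) (u : Fin n → ℝ), f (fun i => u (σ i)) = f u

/-- A function `f : ℝ^n → ℝ` is multiaffine if, fixing all variables except the `j`-th,
the resulting one-variable function is affine (degree at most one). -/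
def IsMultiaffine (n : ℕ) (f : (Fin n → ℝ) → ℝ) : Prop :=
  ∀ (j : Fin n) (u : Fin n → ℝ), ∃ a b : ℝ,
    ∀ x : ℝ, f (Function.update u j x) = a * x + b

/-!
The diagonal node vector of size `n + 1` is `p ^ n * t` followed by the node vector of size `n` at
`q * t`. Expanding `φ_{n+1,k+1}` along this first entry therefore gives a recursion in `n`, and the
splitting `[k + m] = p ^ m [k] + q ^ k [m]` shows that `(pq)^{k(k-1)/2} [n]! / ([k]! [n-k]!) t ^ k`
satisfies the same recursion. So `φ_{n,k}` takes this value on the diagonal, and each summand of the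
blossom restricts to `a_k t ^ k`. Multiplying by `[k]! [n-k]!` keeps the induction free of division.
-/

section PQFactorial

variable {p q : ℝ} {n k : ℕ}

theorem pqInt_add (p q : ℝ) (k m : ℕ) :
    pqInt p q (k + m) = p ^ m * pqInt p q k + q ^ k * pqInt p q m := by
  simp only [pqInt, Finset.sum_range_add, Finset.mul_sum]
  congr 1 <;> refine Finset.sum_congr rfl fun j hj => ?_
  · have hexp : k + m - 1 - j = m + (k - 1 - j) := by grind
    rw [hexp, pow_add, mul_assoc]
  · have hexp : k + m - 1 - (k + j) = m - 1 - j := by lia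
    rw [hexp, pow_add, mul_left_comm]

theorem pqInt_succ_pos (hp : 0 < p) (hq : 0 < q) (n : ℕ) : 0 < pqInt p q (n + 1) :=
  Finset.sum_pos (fun _ _ => by positivity) Finset.nonempty_range_add_one

theorem pqFact_pos (hp : 0 < p) (hq : 0 < q) : ∀ n, 0 < pqFact p q n
  | 0 => one_pos
  | n + 1 => mul_pos (pqFact_pos hp hq n) (pqInt_succ_pos hp hq n)

theorem pqFact_dvd_pqFact (p q : ℝ) (hk : k ≤ n) : pqFact p q k ∣ pqFact p q n := by
  induction n, hk using Nat.le_induction with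
  | base => rfl
  | succ n _ ih => exact ih.mul_right _

theorem pqFact_ne_zero_of_le (hk : k ≤ n) (hfact : pqFact p q n ≠ 0) : pqFact p q k ≠ 0 :=
  ne_zero_of_dvd_ne_zero hfact (pqFact_dvd_pqFact p q hk)

theorem pqFact_mul_pqFact_ne_zero (hk : k ≤ n) (hfact : pqFact p q n ≠ 0) :
    pqFact p q k * pqFact p q (n - k) ≠ 0 :=
  mul_ne_zero (pqFact_ne_zero_of_le hk hfact) (pqFact_ne_zero_of_le (n.sub_le k) hfact)

theorem pqBinom_ne_zero (hk : k ≤ n) (hfact : pqFact p q n ≠ 0) : pqBinom p q n k ≠ 0 :=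
  div_ne_zero hfact (pqFact_mul_pqFact_ne_zero hk hfact)

end PQFactorial

section ElementarySymmetric

theorem esymmEval_eq_esymm (n k : ℕ) (u : Fin n → ℝ) :
    esymmEval n k u = (Finset.univ.val.map u).esymm k :=
  (Finset.esymm_map_val u Finset.univ k).symm

@[simp]
theorem esymmEval_zero_right (n : ℕ) (u : Fin n → ℝ) : esymmEval n 0 u = 1 := by
  simp [esymmEval]

theorem esymmEval_eq_zero_of_lt {n k : ℕ} (h : n < k) (u : Fin n → ℝ) : esymmEval n k u = 0 := by
  simp [esymmEval, Finset.powersetCard_eq_empty.mpr, h]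

theorem esymm_cons {R : Type*} [CommSemiring R] (x : R) (s : Multiset R) (k : ℕ) :
    (x ::ₘ s).esymm (k + 1) = s.esymm (k + 1) + x * s.esymm k := by
  simp [Multiset.esymm, Multiset.powersetCard_cons, Multiset.sum_map_mul_left]

theorem esymmEval_cons (n k : ℕ) (x : ℝ) (u : Fin n → ℝ) :
    esymmEval (n + 1) (k + 1) (Fin.cons x u : Fin (n + 1) → ℝ) =
      esymmEval n (k + 1) u + x * esymmEval n k u := by
  have hmap : Finset.univ.val.map (Fin.cons x u : Fin (n + 1) → ℝ) =
      x ::ₘ Finset.univ.val.map u := by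
    simp [Fin.univ_succ, Function.comp_def]
  simp only [esymmEval_eq_esymm, hmap, esymm_cons]

theorem isSymmetricFn_esymmEval (n k : ℕ) : IsSymmetricFn n (esymmEval n k) := fun σ u =>
  Finset.sum_equiv σ.finsetCongr (by simp) (by simp)

end ElementarySymmetric

section Multiaffine

variable {n : ℕ}

theorem IsMultiaffine.const_mul {f : (Fin n → ℝ) → ℝ} (hf : IsMultiaffine n f) (c : ℝ) :
    IsMultiaffine n fun u => c * f u := by
  intro j u
  obtain ⟨a, b, hab⟩ := hf j u
  exact ⟨c * a, c * b, fun x => by simp only [hab]; ring⟩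

theorem IsMultiaffine.sum {ι : Type*} (T : Finset ι) {f : ι → (Fin n → ℝ) → ℝ}
    (hf : ∀ i ∈ T, IsMultiaffine n (f i)) : IsMultiaffine n fun u => ∑ i ∈ T, f i u := by
  intro j u
  choose! a b hab using fun i hi => hf i hi j u
  refine ⟨∑ i ∈ T, a i, ∑ i ∈ T, b i, fun x => ?_⟩
  rw [Finset.sum_mul, ← Finset.sum_add_distrib]
  exact Finset.sum_congr rfl fun i hi => hab i hi x

theorem isMultiaffine_prod (T : Finset (Fin n)) : IsMultiaffine n fun u => ∏ i ∈ T, u i := by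
  intro j u
  by_cases hj : j ∈ T
  · exact ⟨∏ i ∈ T \ {j}, u i, 0, fun x => by simp [Finset.prod_update_of_mem hj, mul_comm]⟩
  · exact ⟨0, ∏ i ∈ T, u i, fun x => by simp [Finset.prod_update_of_notMem hj]⟩

theorem isMultiaffine_esymmEval (n k : ℕ) : IsMultiaffine n (esymmEval n k) :=
  .sum _ fun T _ => isMultiaffine_prod T

end Multiaffine

section Diagonal

/-- The diagonal argument `(p^{n-1} t, p^{n-2} q t, …, q^{n-1} t)` at which the `(p,q)`-blossom is
required to reproduce the polynomial; the entries are indexed from `0`. -/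
def pqDiag (p q : ℝ) (n : ℕ) (t : ℝ) : Fin n → ℝ :=
  fun i => p ^ (n - 1 - (i : ℕ)) * q ^ (i : ℕ) * t

theorem pqDiag_succ (p q : ℝ) (n : ℕ) (t : ℝ) :
    pqDiag p q (n + 1) t = Fin.cons (p ^ n * t) (pqDiag p q n (q * t)) := by
  funext i
  cases i using Fin.cases with
  | zero => simp [pqDiag]
  | succ i =>
    have hexp : n + 1 - 1 - ((i : ℕ) + 1) = n - 1 - i := by lia
    simp only [pqDiag, Fin.val_succ, Fin.cons_succ, hexp]
    ring

theorem esymmEval_pqDiag_succ (p q : ℝ) (n k : ℕ) (t : ℝ) :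
    esymmEval (n + 1) (k + 1) (pqDiag p q (n + 1) t) =
      esymmEval n (k + 1) (pqDiag p q n (q * t)) +
        p ^ n * t * esymmEval n k (pqDiag p q n (q * t)) := by
  rw [pqDiag_succ, esymmEval_cons]

theorem esymmEval_pqDiag_mul_pqFact (p q : ℝ) {n k m : ℕ} (hkm : k + m = n) (t : ℝ) :
    esymmEval n k (pqDiag p q n t) * (pqFact p q k * pqFact p q m) =
      (p * q) ^ (k * (k - 1) / 2) * pqFact p q n * t ^ k := by
  induction n generalizing k m t with
  | zero =>
    obtain ⟨rfl, rfl⟩ : k = 0 ∧ m = 0 := by lia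
    simp [pqFact]
  | succ n ih =>
    cases k with
    | zero =>
      obtain rfl : m = n + 1 := by lia
      simp [pqFact]
    | succ k =>
      have hk := ih (k := k) (m := m) (by lia) (q * t)
      rw [esymmEval_pqDiag_succ, Nat.triangle_succ, pow_add]
      cases m with
      | zero =>
        obtain rfl : k = n := by lia
        rw [esymmEval_eq_zero_of_lt k.lt_succ_self]
        simp only [pqFact] at hk ⊢
        linear_combination p ^ k * t * pqInt p q (k + 1) * hk
      | succ m =>
        have hk_succ := ih (k := k + 1) (m := m) (by lia) (q * t)
        obtain rfl : n = k + (m + 1) := by lia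
        have hsplit : pqInt p q (k + (m + 1) + 1) =
            p ^ (m + 1) * pqInt p q (k + 1) + q ^ (k + 1) * pqInt p q (m + 1) := by
          rw [← pqInt_add, add_right_comm]
        rw [Nat.triangle_succ, pow_add] at hk_succ
        simp only [pqFact, hsplit] at hk hk_succ ⊢
        linear_combination pqInt p q (m + 1) * hk_succ +
          p ^ (k + (m + 1)) * t * pqInt p q (k + 1) * hk

theorem esymmEval_pqDiag {p q : ℝ} {n k : ℕ} (hk : k ≤ n) (hfact : pqFact p q n ≠ 0) (t : ℝ) :
    esymmEval n k (pqDiag p q n t) =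
      (p * q) ^ (k * (k - 1) / 2) * pqBinom p q n k * t ^ k := by
  rw [pqBinom, mul_div_assoc', div_mul_eq_mul_div,
    eq_div_iff (pqFact_mul_pqFact_ne_zero hk hfact)]
  exact esymmEval_pqDiag_mul_pqFact p q (Nat.add_sub_of_le hk) t

end Diagonal

theorem pq_blossom_explicit_formula_general (n : ℕ)
    (p q : ℝ) (hpq : p * q ≠ 0) (hfact : pqFact p q n ≠ 0)
    (a : ℕ → ℝ) (S : ℝ → ℝ)
    (hS : ∀ t : ℝ, S t = ∑ k ∈ Finset.range (n + 1), a k * t ^ k)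
    (s : (Fin n → ℝ) → ℝ)
    (hs : ∀ u, s u = ∑ k ∈ Finset.range (n + 1),
      a k * esymmEval n k u / ((p * q) ^ (k * (k - 1) / 2) * pqBinom p q n k)) :
    IsSymmetricFn n s ∧ IsMultiaffine n s ∧
      ∀ t : ℝ, s (fun i => p ^ (n - 1 - (i : ℕ)) * q ^ (i : ℕ) * t) = S t := by
  have hdenom : ∀ k ≤ n, (p * q) ^ (k * (k - 1) / 2) * pqBinom p q n k ≠ 0 := fun k hk =>
    mul_ne_zero (pow_ne_zero _ hpq) (pqBinom_ne_zero hk hfact)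
  refine ⟨fun σ u => ?_, ?_, fun t => ?_⟩
  · simp only [hs, isSymmetricFn_esymmEval n _ σ u]
  · simp only [funext hs, mul_div_right_comm]
    exact .sum _ fun k _ => (isMultiaffine_esymmEval n k).const_mul _
  · change s (pqDiag p q n t) = S t
    rw [hs, hS]
    refine Finset.sum_congr rfl fun k hk => ?_
    have hk : k ≤ n := Finset.mem_range_succ_iff.mp hk
    rw [div_eq_iff (hdenom k hk), esymmEval_pqDiag hk hfact]
    ring

/-- explicit formula for the (p,q)-blossom of
`S(t) = Σ_{k=0}^{n} a_k t^k`, namely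
`s(u_1, …, u_n) = Σ_{k=0}^{n} a_k φ_{n,k}(u_1, …, u_n) / ((pq)^{k(k-1)/2} [n choose k]_{p,q})`. -/
theorem pq_blossom_explicit_formula (n : ℕ) (hn : 1 ≤ n)
    (p q : ℝ) (h0 : 0 < q) (hqp : q < p)
    (a : ℕ → ℝ) (S : ℝ → ℝ)
    (hS : ∀ t : ℝ, S t = ∑ k ∈ Finset.range (n + 1), a k * t ^ k)
    (s : (Fin n → ℝ) → ℝ)
    (hs : ∀ u, s u = ∑ k ∈ Finset.range (n + 1),
      a k * esymmEval n k u / ((p * q) ^ (k * (k - 1) / 2) * pqBinom p q n k)) :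
    IsSymmetricFn n s ∧ IsMultiaffine n s ∧
      ∀ t : ℝ, s (fun i => p ^ (n - 1 - (i : ℕ)) * q ^ (i : ℕ) * t) = S t :=
  pq_blossom_explicit_formula_general n p q (mul_pos (h0.trans hqp) h0).ne'
    (pqFact_pos (h0.trans hqp) h0 n).ne' a S hS s hs
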